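/- The quadratic form q(x₁,x₂,x₃,x₄) = −α x₁² − β x₂² − c x₂x₃ − x₃² − d x₁x₄ + x₃x₄ − x₄² with α, β > 0 is negative semidefinite whenever c² ≤ 2β and d² ≤ 2α. (In particular the paper's sufficient conditions b ≤ 2η_B, 2η_I, 4φ_B, 4φ̄ with c = b/(2η_I), d = b/(2η_B), α = φ_B/η_B, β = φ̄/η_I imply these hypotheses.) -/

import Mathlib

/-- The quadratic form
`q(x₁,x₂,x₃,x₄) = −α x₁² − β x₂² − c x₂x₃ − x₃² − d x₁x₄ + x₃x₄ − x₄²`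
with `α, β > 0` is negative semidefinite whenever `c² ≤ 2β` and `d² ≤ 2α`. -/
theorem stmt_14 (α β c d : ℝ) (hα : 0 < α) (hβ : 0 < β)
    (hc : c ^ 2 ≤ 2 * β) (hd : d ^ 2 ≤ 2 * α) :
    ∀ x₁ x₂ x₃ x₄ : ℝ,
      -α * x₁ ^ 2 - β * x₂ ^ 2 - c * x₂ * x₃ - x₃ ^ 2
        - d * x₁ * x₄ + x₃ * x₄ - x₄ ^ 2 ≤ 0 := by
  intro x₁ x₂ x₃ x₄
  have h1 := mul_le_mul_of_nonneg_right hc (sq_nonneg x₂)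
  have h2 := mul_le_mul_of_nonneg_right hd (sq_nonneg x₁)
  linarith [sq_nonneg (c * x₂ + x₃), sq_nonneg (d * x₁ + x₄), sq_nonneg (x₃ - x₄),
    show (c * x₂ + x₃) ^ 2 = c ^ 2 * x₂ ^ 2 + 2 * (c * x₂ * x₃) + x₃ ^ 2 by ring,
    show (d * x₁ + x₄) ^ 2 = d ^ 2 * x₁ ^ 2 + 2 * (d * x₁ * x₄) + x₄ ^ 2 by ring]
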